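/- For every λ ∈ k with λ ≠ 0 and λ ≠ 1, the linear map τ_λ is bijective (its determinant equals -4λ(1-λ)), and for each i ∈ {0,1,2,3}, every vector (a,b,c) ∈ k^3 with d_i(τ_λ(a,b,c)) = 0 satisfies b^2 + 4ac = 0. -/

import Mathlib

/-!
The determinant `-4λ(1-λ)` is a unit because the characteristic is odd and `λ ≠ 0, 1`. For the
degeneracy condition, put `y = τ_λ(a,b,c)`. The equations `d₀ y = 0` and `d₃ y = 0` give
`b = c = 0` and `a = b = 0` respectively; `d₁ y = 0` gives `2a = b = -2c`, and `d₂ y = 0` gives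
`2a = λb` and `b = -2λc`. In each case `b² + 4ac = 0`.
-/

noncomputable section

/-- `τ_λ` as a `3 × 3` matrix (acting on column vectors):
`τ_λ(a,b,c) = (-2a + λb, (1-λ)b, λb + 2λc)`. -/
def tauMat (k : Type) [Field k] (l : k) : Matrix (Fin 3) (Fin 3) k :=
  !![-2, l, 0; 0, 1 - l, 0; 0, l, 2 * l]

/-- The matrices of the face maps `d₀, d₁, d₂, d₃ : k³ → k²`. -/
def d32 (k : Type) [Field k] : Fin 4 → Matrix (Fin 2) (Fin 3) k :=
  ![!![0, 1, 0; 0, 0, 1], !![1, 1, 0; 0, 0, 1], !![1, 0, 0; 0, 1, 1], !![1, 0, 0; 0, 1, 0]]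

theorem statement5 (k : Type) [Field k] [Fintype k] (p : ℕ) [Fact p.Prime] [CharP k p]
    (hp3 : 3 ≤ p) (l : k) (hl0 : l ≠ 0) (hl1 : l ≠ 1) :
    Function.Bijective (tauMat k l).mulVecLin ∧
    (tauMat k l).det = -4 * l * (1 - l) ∧
    ∀ i : Fin 4, ∀ x : Fin 3 → k,
      (d32 k i).mulVec ((tauMat k l).mulVec x) = 0 →
        x 1 ^ 2 + 4 * x 0 * x 2 = 0 := by
  have h2 : (2 : k) ≠ 0 := Ring.two_ne_zero (by rw [ringChar.eq k p]; omega)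
  have h1 : 1 - l ≠ 0 := sub_ne_zero.mpr hl1.symm
  have hdet : (tauMat k l).det = -4 * l * (1 - l) := by
    simp [tauMat, Matrix.det_fin_three]
    ring
  refine ⟨?_, hdet, ?_⟩
  · have hu : IsUnit (tauMat k l) := by
      rw [Matrix.isUnit_iff_isUnit_det, hdet, isUnit_iff_ne_zero]
      have h4 : (-4 : k) ≠ 0 := by
        rw [show (-4 : k) = -(2 * 2) by norm_num]
        exact neg_ne_zero.mpr (mul_ne_zero h2 h2)
      exact mul_ne_zero (mul_ne_zero h4 hl0) h1
    exact ⟨Matrix.mulVec_injective_iff_isUnit.mpr hu, Matrix.mulVec_surjective_iff_isUnit.mpr hu⟩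
  · intro i x hx
    have e0 := congrFun hx 0
    have e1 := congrFun hx 1
    fin_cases i <;>
      simp [d32, tauMat, Matrix.mulVec, dotProduct, Fin.sum_univ_three] at e0 e1
    -- `d₀`: the kernel condition forces `b = c = 0`.
    · have hb : x 1 = 0 := e0.resolve_left h1
      have hc : x 2 = 0 := by simpa [hb, hl0, h2] using e1
      simp [hb, hc]
    -- `d₁`: the conditions read `b = 2a` and, after cancelling `λ`, `b = -2c`.
    · have hc : x 1 + 2 * x 2 = 0 :=
        mul_left_cancel₀ hl0 (by linear_combination e1)
      linear_combination x 1 * hc - 2 * x 2 * e0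
    -- `d₂`: the conditions read `2a = λb` and `b = -2λc`.
    · linear_combination x 1 * e1 - 2 * x 2 * e0
    -- `d₃`: the kernel condition forces `a = b = 0`.
    · have hb : x 1 = 0 := e1.resolve_left h1
      have ha : x 0 = 0 := by simpa [hb, h2] using e0
      simp [hb, ha]
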